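/- arXiv:2211.17227 — 8 statements merged into one kernel-verified Lean document; each statement's English description precedes it below -/
import Mathlib

section
/- Let R be a Noetherian commutative ring and let x ∈ R be a nonzerodivisor such that R is x-adically complete. Let M be a cochain complex of R-modules each of whose cohomology modules H^i(M) is derived x-complete, and let C denote the mapping cone of the multiplication-by-x endomorphism of M (so for every i there is a short exact sequence 0 → H^i(M)/x·H^i(M) → H^i(C) → H^{i+1}(M)[x] → 0, where H^{i+1}(M)[x] is the x-torsion submodule). Suppose there are integers n₀ ≤ d such that H^i(C) = 0 for all i < n₀ and H^i(C) is a finitely generated R-module for all i ≤ d. Then H^i(M) = 0 for all i < n₀ and H^i(M) is a finitely generated R-module for all i ≤ d. -/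
open CategoryTheory

/-- An `R`-module `M` is *derived `x`-complete* if the endomorphism
`Φ_x : ∏_{n ∈ ℕ} M → ∏_{n ∈ ℕ} M`, `(m_n)_n ↦ (m_n − x • m_{n+1})_n`, is bijective. -/
def IsDerivedComplete (R : Type*) [CommRing R] (x : R)
    (M : Type*) [AddCommGroup M] [Module R M] : Prop :=
  Function.Bijective (fun f : ℕ → M => fun n => f n - x • f (n + 1))

/-!
Multiplication by `x` on `M` and the inclusion of `M` into its cone `C` give exact sequences
`H^i(M) → H^i(M) → H^i(C)`, so `H^i(M) / x H^i(M)` embeds into `H^i(C)` and inherits its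
vanishing and, `R` being Noetherian, its finiteness. Both properties pass from `N / xN` to a derived
`x`-complete module `N` by a Nakayama argument. If `xN = N`, dividing `n ∈ N` repeatedly by `x`
gives a sequence in the kernel of `Φ_x`, whence `N = 0`. If `N / xN` is generated by the images of
finitely many elements of `N`, these define a map `R^k → N`; since `R` is itself derived
`x`-complete, so is the cokernel `Q` of this map, and `xQ = Q` forces `Q = 0`.
-/

section

open scoped Pointwise

section DerivedComplete

variable {R : Type*} [CommRing R] {x : R} {M P : Type*} [AddCommGroup M] [Module R M]
  [AddCommGroup P] [Module R P]

lemma isDerivedComplete_iff :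
    IsDerivedComplete R x M ↔
      (∀ f : ℕ → M, (∀ n, f n = x • f (n + 1)) → ∀ n, f n = 0) ∧
        ∀ g : ℕ → M, ∃ f : ℕ → M, ∀ n, f n - x • f (n + 1) = g n := by
  let Φ : (ℕ → M) →+ (ℕ → M) :=
    { toFun f n := f n - x • f (n + 1)
      map_zero' := by ext; simp
      map_add' f g := by ext; simp only [Pi.add_apply, smul_add]; abel }
  refine and_congr ((injective_iff_map_eq_zero Φ).trans ?_) ?_
  · simp only [funext_iff, Φ, AddMonoidHom.coe_mk, ZeroHom.coe_mk, Pi.zero_apply, sub_eq_zero]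
  · simp only [Function.Surjective, funext_iff]

lemma sModEq_smul_pow_succ {I : Ideal R} (hx : x ∈ I) {N : ℕ} {m m' : M}
    (h : m ≡ m' [SMOD (I ^ N • ⊤ : Submodule R M)]) :
    x • m ≡ x • m' [SMOD (I ^ (N + 1) • ⊤ : Submodule R M)] := by
  rw [SModEq.sub_mem] at h ⊢
  rw [← smul_sub, pow_succ', ← smul_eq_mul, smul_assoc]
  exact Submodule.smul_mem_smul hx h

lemma existsUnique_isFixedPt_of_sModEq_contracting {I : Ideal R} [IsAdicComplete I M] {ι : Type*}
    {Ψ : (ι → M) → ι → M}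
    (hΨ : ∀ {N : ℕ} {f g : ι → M}, (∀ i, f i ≡ g i [SMOD (I ^ N • ⊤ : Submodule R M)]) →
      ∀ i, Ψ f i ≡ Ψ g i [SMOD (I ^ (N + 1) • ⊤ : Submodule R M)]) :
    ∃! f, Function.IsFixedPt Ψ f := by
  have iterate_cauchy (N k : ℕ) :
      ∀ i, Ψ^[N] 0 i ≡ Ψ^[N + k] 0 i [SMOD (I ^ N • ⊤ : Submodule R M)] := by
    induction N with
    | zero => simp
    | succ N ih => simpa only [Nat.succ_add, Function.iterate_succ_apply'] using! hΨ ih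
  have iterate_converges (i : ι) :
      ∃ l : M, ∀ N, Ψ^[N] 0 i ≡ l [SMOD (I ^ N • ⊤ : Submodule R M)] :=
    IsPrecomplete.prec inferInstance fun {N N'} h => by
      simpa only [Nat.add_sub_cancel' h] using iterate_cauchy N (N' - N) i
  choose f hf using iterate_converges
  refine ⟨f, funext fun i => IsHausdorff.eq_iff_smodEq (I := I).2 fun N => ?_, fun g hg => ?_⟩
  · have hΨf := hΨ (fun i => hf i N) i
    rw [← Function.iterate_succ_apply' Ψ] at hΨf
    exact (hΨf.symm.trans (hf i (N + 1))).mono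
      (Submodule.smul_mono_left (Ideal.pow_le_pow_right N.le_succ))
  · have iterate_sModEq (N : ℕ) : ∀ i, Ψ^[N] 0 i ≡ g i [SMOD (I ^ N • ⊤ : Submodule R M)] := by
      induction N with
      | zero => simp
      | succ N ih => simpa only [Function.iterate_succ_apply', hg.eq] using hΨ ih
    exact funext fun i => IsHausdorff.eq_iff_smodEq (I := I).2 fun N =>
      (iterate_sModEq N i).symm.trans (hf i N)

lemma isDerivedComplete_of_isAdicComplete_of_mem {I : Ideal R} [IsAdicComplete I M] (hx : x ∈ I) :
    IsDerivedComplete R x M := by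
  refine (Function.bijective_iff_existsUnique _).2 fun g => ?_
  have existsUnique_fixedPt : ∃! f : ℕ → M, (fun n => g n + x • f (n + 1)) = f :=
    existsUnique_isFixedPt_of_sModEq_contracting (I := I) fun h n =>
      SModEq.rfl.add (sModEq_smul_pow_succ hx (h (n + 1)))
  simpa only [funext_iff, sub_eq_iff_eq_add, @eq_comm _ (g _ + _)] using existsUnique_fixedPt

namespace IsDerivedComplete

lemma pi {ι : Type*} {M : ι → Type*} [∀ i, AddCommGroup (M i)] [∀ i, Module R (M i)]
    (hM : ∀ i, IsDerivedComplete R x (M i)) : IsDerivedComplete R x (∀ i, M i) := by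
  refine isDerivedComplete_iff.2 ⟨fun f hf n => ?_, fun g => ?_⟩
  · ext i
    exact (isDerivedComplete_iff.1 (hM i)).1 (f · i) (fun n => congrFun (hf n) i) n
  · choose f hf using fun i => (isDerivedComplete_iff.1 (hM i)).2 (g · i)
    exact ⟨fun n i => f i n, fun n => funext fun i => hf i n⟩

lemma quotient_range (hM : IsDerivedComplete R x M) (hP : IsDerivedComplete R x P)
    (φ : P →ₗ[R] M) : IsDerivedComplete R x (M ⧸ LinearMap.range φ) := by
  rw [isDerivedComplete_iff] at hP hM ⊢
  refine ⟨fun f hf n => ?_, fun g => ?_⟩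
  · choose m hm using fun n => Submodule.Quotient.mk_surjective _ (f n)
    have hΦm (n : ℕ) : ∃ p, φ p = m n - x • m (n + 1) := by
      rw [← LinearMap.mem_range, ← Submodule.Quotient.eq, Submodule.Quotient.mk_smul, hm, hm, hf n]
    choose p hp using hΦm
    obtain ⟨q, hq⟩ := hP.2 p
    have hmq : ∀ n, m n - φ (q n) = 0 := hM.1 _ fun n => by
      have hφ := congrArg φ (hq n)
      rw [map_sub, map_smul, hp] at hφ
      rw [smul_sub, sub_eq_sub_iff_sub_eq_sub, ← hφ]
    rw [← hm n, Submodule.Quotient.mk_eq_zero, sub_eq_zero.1 (hmq n)]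
    exact LinearMap.mem_range_self φ _
  · choose m hm using fun n => Submodule.Quotient.mk_surjective _ (g n)
    obtain ⟨f, hf⟩ := hM.2 m
    refine ⟨fun n => Submodule.Quotient.mk (f n), fun n => ?_⟩
    rw [← Submodule.Quotient.mk_smul, ← Submodule.Quotient.mk_sub, hf, hm]

lemma subsingleton_of_surjective_smul (hM : IsDerivedComplete R x M)
    (hx : Function.Surjective fun m : M => x • m) : Subsingleton M := by
  choose divX hdivX using hx
  refine subsingleton_of_forall_eq 0 fun m => ?_
  refine (isDerivedComplete_iff.1 hM).1 (fun n => divX^[n] m) (fun n => ?_) 0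
  rw [Function.iterate_succ_apply']
  exact (hdivX _).symm

lemma subsingleton_of_subsingleton_quotSMulTop (hM : IsDerivedComplete R x M)
    [Subsingleton (QuotSMulTop x M)] : Subsingleton M := by
  have smul_top : x • (⊤ : Submodule R M) = ⊤ :=
    Submodule.Quotient.subsingleton_iff.1 inferInstance
  refine hM.subsingleton_of_surjective_smul fun m => ?_
  obtain ⟨m', -, hm'⟩ :=
    (Submodule.mem_smul_pointwise_iff_exists m x ⊤).1 (smul_top ▸ Submodule.mem_top)
  exact ⟨m', hm'⟩

lemma finite_of_finite_quotSMulTop (hM : IsDerivedComplete R x M) (hR : IsDerivedComplete R x R)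
    [Module.Finite R (QuotSMulTop x M)] : Module.Finite R M := by
  obtain ⟨k, f, hf⟩ := Module.Finite.exists_fin' R (QuotSMulTop x M)
  obtain ⟨g, hg⟩ := Module.projective_lifting_property (Submodule.mkQ (x • ⊤)) f
    (Submodule.mkQ_surjective _)
  have smul_surjective : Function.Surjective fun m : M ⧸ LinearMap.range g => x • m := by
    refine (Submodule.mkQ_surjective _).forall.2 fun m => ?_
    obtain ⟨v, hv⟩ := hf (Submodule.Quotient.mk m)
    have hmv : m - g v ∈ x • (⊤ : Submodule R M) := by
      rw [← Submodule.Quotient.eq, ← hv, ← hg]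
      rfl
    obtain ⟨m', -, hm'⟩ := (Submodule.mem_smul_pointwise_iff_exists _ _ _).1 hmv
    refine ⟨Submodule.Quotient.mk m', (Submodule.Quotient.eq _).2 ?_⟩
    simp [hm']
  have := (hM.quotient_range (pi fun _ => hR) g).subsingleton_of_surjective_smul smul_surjective
  exact Module.Finite.of_surjective g
    (LinearMap.range_eq_top.1 (Submodule.Quotient.subsingleton_iff.1 this))

end IsDerivedComplete

end DerivedComplete

section MappingCone

open CochainComplex HomologicalComplex

lemma homologyMap_smul {R C ι : Type*} [Semiring R] [Category* C] [Preadditive C] [Linear R C]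
    {c : ComplexShape ι} {K L : HomologicalComplex C c} (x : R) (φ : K ⟶ L) (i : ι)
    [K.HasHomology i] [L.HasHomology i] :
    homologyMap (x • φ) i = x • homologyMap φ i :=
  ShortComplex.homologyMap_smul ((shortComplexFunctor C c i).map φ) x

section Abelian

variable {C : Type*} [Category* C] [Abelian C] {K L : CochainComplex C ℤ}

lemma homologyMap_comp_homologyMap_inr (φ : K ⟶ L) (i : ℤ) :
    homologyMap φ i ≫ homologyMap (mappingCone.inr φ) i = 0 := by
  have null_homotopy : Homotopy (φ ≫ mappingCone.inr φ) 0 :=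
    homotopyCofiber.inrCompHomotopy φ fun j => ⟨j - 1, by simp⟩
  rw [← homologyMap_comp, null_homotopy.homologyMap_eq, homologyMap_zero]

lemma exact_homologyMap_homologyMap_inr (φ : K ⟶ L) (i : ℤ) :
    (ShortComplex.mk _ _ (homologyMap_comp_homologyMap_inr φ i)).Exact := by
  let F := HomotopyCategory.homologyFunctor C (ComplexShape.up ℤ) i
  let e := HomotopyCategory.homologyFunctorFactors C (ComplexShape.up ℤ) i
  refine (ShortComplex.exact_iff_of_iso ?_).1 (F.map_distinguished_exact _
    (HomotopyCategory.mappingCone_triangleh_distinguished φ))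
  exact ShortComplex.isoMk (e.app K) (e.app L) (e.app (mappingCone φ))
    (e.hom.naturality φ).symm (e.hom.naturality (mappingCone.inr φ)).symm

end Abelian

universe u v

variable {R : Type u} [CommRing R] (x : R) (M : CochainComplex (ModuleCat.{v} R) ℤ) (i : ℤ)

lemma ker_homologyMap_inr_smul_id :
    LinearMap.ker (homologyMap (mappingCone.inr (x • 𝟙 M)) i).hom =
      x • (⊤ : Submodule R (M.homology i)) := by
  have range_homologyMap : LinearMap.range (homologyMap (x • 𝟙 M) i).hom = x • ⊤ := by
    rw [homologyMap_smul, homologyMap_id]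
    ext h
    simp [Submodule.mem_smul_pointwise_iff_exists]
  exact (exact_homologyMap_homologyMap_inr (x • 𝟙 M) i).moduleCat_range_eq_ker.symm.trans
    range_homologyMap

lemma exists_injective_quotSMulTop_homology_mappingCone :
    ∃ f : QuotSMulTop x (M.homology i) →ₗ[R] (mappingCone (x • 𝟙 M)).homology i,
      Function.Injective f :=
  have ker_inr := ker_homologyMap_inr_smul_id x M i
  ⟨Submodule.liftQ _ _ ker_inr.ge,
    LinearMap.ker_eq_bot.1 (Submodule.ker_liftQ_eq_bot' _ _ ker_inr.symm)⟩

theorem homology_vanishing_and_finite_of_cone_general [IsNoetherianRing R]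
    [IsAdicComplete (Ideal.span {x}) R] (hM : IsDerivedComplete R x (M.homology i)) :
    (Subsingleton ((mappingCone (x • 𝟙 M)).homology i) → Subsingleton (M.homology i)) ∧
      (Module.Finite R ((mappingCone (x • 𝟙 M)).homology i) →
        Module.Finite R (M.homology i)) := by
  obtain ⟨f, hf⟩ := exists_injective_quotSMulTop_homology_mappingCone x M i
  refine ⟨fun _ => ?_, fun _ => ?_⟩
  · have : Subsingleton (QuotSMulTop x (M.homology i)) := hf.subsingleton
    exact hM.subsingleton_of_subsingleton_quotSMulTop
  · have : Module.Finite R (QuotSMulTop x (M.homology i)) := Module.Finite.of_injective f hf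
    have hR : IsDerivedComplete R x R :=
      isDerivedComplete_of_isAdicComplete_of_mem (Ideal.mem_span_singleton_self x)
    exact hM.finite_of_finite_quotSMulTop hR

end MappingCone

end

/-- Let `R` be a Noetherian commutative ring, `x ∈ R` a nonzerodivisor such that `R` is
`x`-adically complete, and `M` a cochain complex of `R`-modules whose cohomology modules are
all derived `x`-complete.  Let `C` be the mapping cone of the multiplication-by-`x`
endomorphism of `M`.  If there are integers `n₀ ≤ d` such that `H^i(C) = 0` for `i < n₀`
and `H^i(C)` is finitely generated for `i ≤ d`, then `H^i(M) = 0` for `i < n₀` and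
`H^i(M)` is finitely generated for `i ≤ d`. -/
theorem homology_vanishing_and_finite_of_cone
    {R : Type} [CommRing R] [IsNoetherianRing R] (x : R)
    (hx : x ∈ nonZeroDivisors R)
    [IsAdicComplete (Ideal.span {x}) R]
    (M : CochainComplex (ModuleCat R) ℤ)
    (hM : ∀ i : ℤ, IsDerivedComplete R x (M.homology i))
    (C : CochainComplex (ModuleCat R) ℤ) (hC : C = CochainComplex.mappingCone (x • 𝟙 M))
    (n₀ d : ℤ) (hn₀d : n₀ ≤ d)
    (hCvanish : ∀ i < n₀, Subsingleton (C.homology i))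
    (hCfin : ∀ i ≤ d, Module.Finite R (C.homology i)) :
    (∀ i < n₀, Subsingleton (M.homology i)) ∧ ∀ i ≤ d, Module.Finite R (M.homology i) := by
  subst hC
  have transfer := fun i => homology_vanishing_and_finite_of_cone_general x M i (hM i)
  exact ⟨fun i hi => (transfer i).1 (hCvanish i hi), fun i hi => (transfer i).2 (hCfin i hi)⟩
end

section
/- Let R be a Noetherian commutative ring and let x ∈ R be an element such that R is x-adically complete. Let M be an R-module that is derived x-complete and such that the quotient M/xM is a finitely generated R-module. Then M is a finitely generated R-module. -/
/-!
Repeatedly approximating `m : M` modulo `x` by elements of a finite free module `F` mapping onto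
`M ⧸ xM` gives a sequence starting at `m` whose image under `Φ_x` comes from a sequence in `F`.
The latter is `Φ_x s` for some `s`, since `R` is complete. Injectivity of `Φ_x` on `M` then forces
`m` to be the image of `s 0`, so `F` maps onto `M`: a Nakayama argument in which `M` need not be
`x`-adically separated.
-/

open Function

section SubSMulShift

variable {R : Type*} [CommRing R] (x : R) (M : Type*) [AddCommGroup M] [Module R M]

/-- The endomorphism `Φ_x` of `∏_{n ∈ ℕ} M` whose bijectivity defines derived `x`-completeness,
as a linear map. -/
def subSMulShift : (ℕ → M) →ₗ[R] (ℕ → M) :=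
  LinearMap.id - x • LinearMap.funLeft R M Nat.succ

variable {x M}

theorem subSMulShift_apply (f : ℕ → M) (n : ℕ) :
    subSMulShift x M f n = f n - x • f (n + 1) :=
  rfl

theorem isDerivedComplete_iff_bijective_subSMulShift :
    IsDerivedComplete R x M ↔ Bijective (subSMulShift x M) :=
  Iff.rfl

theorem subSMulShift_comp_linearMap {N : Type*} [AddCommGroup N] [Module R N]
    (φ : N →ₗ[R] M) (f : ℕ → N) :
    subSMulShift x M (φ ∘ f) = φ ∘ subSMulShift x N f := by
  ext n
  simp only [subSMulShift_apply, comp_apply, map_sub, map_smul]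

theorem subSMulShift_pi_surjective {ι : Type*} {N : ι → Type*} [∀ i, AddCommGroup (N i)]
    [∀ i, Module R (N i)] (hN : ∀ i, Surjective (subSMulShift x (N i))) :
    Surjective (subSMulShift x (∀ i, N i)) := by
  intro r
  choose s hs using fun i => hN i (fun n => r n i)
  exact ⟨fun n i => s i n, funext₂ fun n i => congrFun (hs i) n⟩

end SubSMulShift

section AdicComplete

variable {R : Type*} [CommRing R] {I : Ideal R} {M : Type*} [AddCommGroup M] [Module R M]

theorem exists_sum_range_smodEq [IsPrecomplete I M] {a : ℕ → M}
    (ha : ∀ k, a k ∈ (I ^ k • ⊤ : Submodule R M)) :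
    ∃ L : M, ∀ N, ∑ k ∈ Finset.range N, a k ≡ L [SMOD (I ^ N • ⊤ : Submodule R M)] := by
  refine IsPrecomplete.prec inferInstance fun {m n} hmn => ?_
  rw [SModEq.comm, SModEq.sub_mem, ← Finset.sum_Ico_eq_sub _ hmn]
  exact Submodule.sum_mem _ fun k hk =>
    Submodule.pow_smul_top_le I M (Finset.mem_Ico.mp hk).1 (ha k)

/-- The preimage of `r` is `n ↦ ∑ₖ x ^ k • r (n + k)`. -/
theorem subSMulShift_surjective_of_isAdicComplete [IsAdicComplete I M] {x : R} (hx : x ∈ I) :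
    Surjective (subSMulShift x M) := by
  intro r
  choose s hs using fun n => exists_sum_range_smodEq (I := I) (a := fun k => x ^ k • r (n + k))
    fun k => Submodule.smul_mem_smul (Ideal.pow_mem_pow hx k) Submodule.mem_top
  refine ⟨s, funext fun n => IsHausdorff.eq_iff_smodEq (I := I).mpr fun N => ?_⟩
  have hsum : ∑ k ∈ Finset.range (N + 1), x ^ k • r (n + k)
      - x • ∑ k ∈ Finset.range N, x ^ k • r (n + 1 + k) = r n := by
    simp only [Finset.sum_range_succ', Finset.smul_sum, smul_smul, pow_succ', pow_zero, one_smul,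
      add_zero, add_assoc, add_comm 1, add_sub_cancel_left]
  have hsn := (hs n (N + 1)).mono (Submodule.pow_smul_top_le I M N.le_succ)
  have hlim := hsn.sub ((hs (n + 1) N).smul x)
  rw [hsum] at hlim
  exact hlim.symm

end AdicComplete

section Nakayama

variable {R : Type*} [CommRing R] {x : R} {M : Type*} [AddCommGroup M] [Module R M]

theorem exists_sub_smul_mem_range {N : Type*} [AddCommGroup N] [Module R N] {φ : N →ₗ[R] M}
    (hφ : Surjective ((Ideal.span {x} • ⊤ : Submodule R M).mkQ ∘ₗ φ)) (m : M) :
    ∃ m' : M, m - x • m' ∈ φ.range := by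
  obtain ⟨r, hr⟩ := hφ (Submodule.mkQ _ m)
  have hmem : m - φ r ∈ (Ideal.span {x} • ⊤ : Submodule R M) :=
    (Submodule.Quotient.eq _).mp hr.symm
  rw [Submodule.ideal_span_singleton_smul] at hmem
  obtain ⟨m', -, hm'⟩ := (Submodule.mem_smul_pointwise_iff_exists _ _ _).mp hmem
  exact ⟨m', r, by rw [hm', sub_sub_cancel]⟩

theorem surjective_of_surjective_mkQ_comp {N : Type*} [AddCommGroup N] [Module R N]
    (hN : Surjective (subSMulShift x N)) (hM : Injective (subSMulShift x M)) {φ : N →ₗ[R] M}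
    (hφ : Surjective ((Ideal.span {x} • ⊤ : Submodule R M).mkQ ∘ₗ φ)) :
    Surjective φ := by
  intro m
  choose rem r hr using exists_sub_smul_mem_range hφ
  let f : ℕ → M := fun n => rem^[n] m
  obtain ⟨s, hs⟩ := hN (r ∘ f)
  have hf : subSMulShift x M (φ ∘ s) = subSMulShift x M f := by
    ext n
    rw [subSMulShift_comp_linearMap, hs, subSMulShift_apply]
    simp only [f, comp_apply, hr, iterate_succ_apply']
  exact ⟨s 0, congrFun (hM hf) 0⟩

theorem finite_of_isDerivedComplete_of_finite_quotient_general
    (hR : Surjective (subSMulShift x R)) (hM : Injective (subSMulShift x M))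
    (hfg : Module.Finite R (M ⧸ (Ideal.span {x} • (⊤ : Submodule R M)))) :
    Module.Finite R M := by
  obtain ⟨k, q, hq⟩ := Module.Finite.exists_fin' R (M ⧸ (Ideal.span {x} • (⊤ : Submodule R M)))
  obtain ⟨φ, rfl⟩ := Module.projective_lifting_property (Submodule.mkQ _) q
    (Submodule.mkQ_surjective _)
  have hFree : Surjective (subSMulShift x (Fin k → R)) := subSMulShift_pi_surjective fun _ => hR
  exact Module.Finite.of_surjective φ (surjective_of_surjective_mkQ_comp hFree hM hq)

end Nakayama

/-- Let `R` be a Noetherian commutative ring and `x ∈ R` such that `R` is `x`-adically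
complete.  If `M` is a derived `x`-complete `R`-module such that `M/xM` is finitely
generated, then `M` is finitely generated. -/
theorem finite_of_isDerivedComplete_of_finite_quotient
    {R : Type*} [CommRing R] [IsNoetherianRing R] (x : R)
    [IsAdicComplete (Ideal.span {x}) R]
    (M : Type*) [AddCommGroup M] [Module R M]
    (hM : IsDerivedComplete R x M)
    (hfg : Module.Finite R (M ⧸ (Ideal.span {x} • (⊤ : Submodule R M)))) :
    Module.Finite R M :=
  finite_of_isDerivedComplete_of_finite_quotient_general
    (subSMulShift_surjective_of_isAdicComplete (Ideal.mem_span_singleton_self x))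
    (isDerivedComplete_iff_bijective_subSMulShift.mp hM).injective hfg
end

section
/- Let k be a field and let M be a module over the power series ring k[[u]] such that: (i) every element of M is annihilated by some power of u; (ii) M is not of finite length over k[[u]]; and (iii) the u-torsion submodule M[u] = {m ∈ M | u • m = 0} is a finite-dimensional k-vector space. Then the u-adic Tate module T_u(M) is nonzero; that is, there exists a sequence (y_n)_{n ≥ 1} of elements of M, not all zero, such that u^n • y_n = 0 and u • y_{n+1} = y_n for all n ≥ 1. -/
open PowerSeries

/-!
The intersection `D = ⨅ n, xⁿM` satisfies `xD = D`, because `M[x]` is Artinian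
(a Mittag-Leffler argument). Hence every nonzero element of `D ∩ M[x]` is the first term of a
compatible system of `x`-division points. If `D ∩ M[x] = 0`, then `x^N M ∩ M[x] = 0` already
for some `N`. Since `M` is `x`-power torsion, this forces `x^N M = 0`, and then `M = M[x^N]` has
finite length, being an iterated extension of submodules of `M[x]`.
-/

section FiniteLength

variable {R M N P : Type*} [Ring R] [AddCommGroup M] [Module R M] [AddCommGroup N] [Module R N]
  [AddCommGroup P] [Module R P]

theorem isFiniteLength_of_range_eq_ker (hM : IsFiniteLength R M) (hP : IsFiniteLength R P)
    (f : M →ₗ[R] N) (g : N →ₗ[R] P) (h : LinearMap.range f = LinearMap.ker g) :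
    IsFiniteLength R N := by
  rw [isFiniteLength_iff_isNoetherian_isArtinian] at hM hP ⊢
  obtain ⟨_, _⟩ := hM
  obtain ⟨_, _⟩ := hP
  exact ⟨isNoetherian_of_range_eq_ker f g h, isArtinian_of_range_eq_ker f g h⟩

theorem isFiniteLength_comap {f : M →ₗ[R] N} {p : Submodule R N}
    (hf : IsFiniteLength R (LinearMap.ker f)) (hp : IsFiniteLength R p) :
    IsFiniteLength R (p.comap f) := by
  refine isFiniteLength_of_range_eq_ker hf hp
    (Submodule.inclusion (LinearMap.ker_le_comap f)) (f.submoduleComap p) ?_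
  ext m
  simp [Submodule.range_inclusion, Subtype.ext_iff]

theorem isFiniteLength_of_finite_restrictScalars (k : Type*) [Ring k] [IsArtinianRing k]
    [Module k M] [SMul k R] [IsScalarTower k R M] {p : Submodule R M}
    (hp : Module.Finite k (p.restrictScalars k)) : IsFiniteLength R p := by
  have : Module.Finite k p := hp
  exact isFiniteLength_iff_isNoetherian_isArtinian.2
    ⟨isNoetherian_of_tower k inferInstance, isArtinian_of_tower k inferInstance⟩

variable {f : Module.End R M}

theorem isFiniteLength_ker_pow (hf : IsFiniteLength R (LinearMap.ker f)) (n : ℕ) :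
    IsFiniteLength R (LinearMap.ker (f ^ n)) := by
  induction n with
  | zero =>
    rw [pow_zero, Module.End.one_eq_id, LinearMap.ker_id]
    exact .of_subsingleton
  | succ n ih =>
    rw [pow_succ, Module.End.mul_eq_comp, LinearMap.ker_comp]
    exact isFiniteLength_comap hf ih

theorem isFiniteLength_of_isNilpotent (hf : IsFiniteLength R (LinearMap.ker f))
    (hnil : IsNilpotent f) : IsFiniteLength R M := by
  obtain ⟨n, hn⟩ := hnil
  have htop : LinearMap.ker (f ^ n) = ⊤ := by rw [hn, LinearMap.ker_zero]
  exact Submodule.topEquiv.isFiniteLength (htop ▸ isFiniteLength_ker_pow hf n)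

end FiniteLength

section Intersection

variable {R M N : Type*} [Ring R] [AddCommGroup M] [Module R M] [AddCommGroup N] [Module R N]

theorem exists_inf_le_iInf_of_antitone (K : Submodule R M) [IsArtinian R K]
    {S : ℕ → Submodule R M} (hS : Antitone S) : ∃ n, K ⊓ S n ≤ ⨅ i, S i := by
  obtain ⟨n, hn⟩ := IsArtinian.monotone_stabilizes
    ⟨fun i ↦ OrderDual.toDual ((S i).submoduleOf K), fun _ _ hij ↦ Submodule.comap_mono (hS hij)⟩
  refine ⟨n, fun m ⟨hmK, hmn⟩ ↦ (Submodule.mem_iInf S).2 fun i ↦ ?_⟩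
  have hstab : (S n).submoduleOf K = (S (max n i)).submoduleOf K := hn _ (le_max_left n i)
  have hmem : (⟨m, hmK⟩ : K) ∈ (S (max n i)).submoduleOf K := hstab ▸ hmn
  exact hS (le_max_right n i) hmem

theorem map_iInf_eq_of_antitone (f : M →ₗ[R] N) [IsArtinian R (LinearMap.ker f)]
    {S : ℕ → Submodule R M} (hS : Antitone S) : (⨅ i, S i).map f = ⨅ i, (S i).map f := by
  refine le_antisymm (le_iInf fun i ↦ Submodule.map_mono (iInf_le S i)) fun y hy ↦ ?_
  have hlift (i : ℕ) : ∃ m ∈ S i, f m = y := (Submodule.mem_iInf _).1 hy i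
  obtain ⟨n, hn⟩ := exists_inf_le_iInf_of_antitone (LinearMap.ker f) hS
  obtain ⟨m, hm, rfl⟩ := hlift n
  refine ⟨m, (Submodule.mem_iInf S).2 fun i ↦ ?_, rfl⟩
  obtain ⟨m', hm', hmm'⟩ := hlift (max n i)
  have hdiff : m - m' ∈ ⨅ i, S i :=
    hn ⟨LinearMap.sub_mem_ker_iff.2 hmm'.symm, sub_mem hm (hS (le_max_left n i) hm')⟩
  exact (Submodule.sub_mem_iff_left _ (hS (le_max_right n i) hm')).1
    ((Submodule.mem_iInf S).1 hdiff i)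

theorem antitone_range_pow (f : Module.End R M) : Antitone fun n ↦ LinearMap.range (f ^ n) :=
  fun _ _ h ↦ f.iterateRange.monotone h

theorem map_iInf_range_pow_eq (f : Module.End R M) [IsArtinian R (LinearMap.ker f)] :
    (⨅ n, LinearMap.range (f ^ n)).map f = ⨅ n, LinearMap.range (f ^ n) := calc
  _ = ⨅ n, (LinearMap.range (f ^ n)).map f := map_iInf_eq_of_antitone f (antitone_range_pow f)
  _ = ⨅ n, LinearMap.range (f ^ (n + 1)) := iInf_congr fun _ ↦ LinearMap.iterateRange_succ.symm
  _ = ⨅ n, LinearMap.range (f ^ n) := (antitone_range_pow f).iInf_nat_add 1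

theorem eq_bot_of_disjoint_ker {f : Module.End R M} (hf : ∀ m, ∃ n : ℕ, (f ^ n) m = 0)
    {S : Submodule R M} (hS : S ≤ S.comap f) (hdisj : Disjoint (LinearMap.ker f) S) : S = ⊥ := by
  have hzero (n : ℕ) : ∀ m ∈ S, (f ^ n) m = 0 → m = 0 := by
    induction n with
    | zero => exact fun m _ hm ↦ hm
    | succ n ih =>
      exact fun m hmS hm ↦ Submodule.disjoint_def.1 hdisj m (ih (f m) (hS hmS) hm) hmS
  exact (Submodule.eq_bot_iff S).2 fun m hmS ↦ (hf m).elim fun n hm ↦ hzero n m hmS hm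

end Intersection

section TateModule

variable {R M : Type*} [Ring R] [AddCommGroup M] [Module R M]

/-- The Tate module of an endomorphism `f`: the limit of `⋯ → ker f² → ker f → ker f⁰ = 0` with
transition maps `f`. The `x`-adic Tate module `T_x(M)` is the case where `f` is multiplication
by `x`. Sequences start at index `0`, which adds only the term `y 0 = 0`. -/
def tateModule (f : Module.End R M) : Submodule R (ℕ → M) where
  carrier := {y | ∀ n, (f ^ n) (y n) = 0 ∧ f (y (n + 1)) = y n}
  zero_mem' n := by simp
  add_mem' hy hz n := by simp [hy n, hz n]
  smul_mem' r y hy n := by simp [hy n]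

variable {f : Module.End R M}

theorem tateModule.apply_zero {y : ℕ → M} (hy : y ∈ tateModule f) : y 0 = 0 :=
  (hy 0).1

theorem mem_tateModule_of_apply_zero {y : ℕ → M} (h₀ : y 0 = 0) (hy : ∀ n, f (y (n + 1)) = y n) :
    y ∈ tateModule f := by
  refine fun n ↦ ⟨?_, hy n⟩
  induction n with
  | zero => exact h₀
  | succ n ih => rw [pow_succ, Module.End.mul_apply, hy, ih]

theorem exists_mem_tateModule_apply_one_eq {D : Submodule R M} (hD : D ≤ D.map f) {v : M}
    (hvD : v ∈ D) (hv : f v = 0) : ∃ y ∈ tateModule f, y 1 = v := by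
  have hlift (d : D) : ∃ e : D, f e = d := by simpa using hD d.2
  choose g hg using hlift
  let y : ℕ → M
    | 0 => 0
    | n + 1 => (g^[n] ⟨v, hvD⟩ : D)
  refine ⟨y, mem_tateModule_of_apply_zero rfl fun n ↦ ?_, rfl⟩
  cases n with
  | zero => exact hv
  | succ n => simp only [y, Function.iterate_succ_apply', hg]

theorem tateModule_ne_bot_of_not_isNilpotent [IsArtinian R (LinearMap.ker f)]
    (htors : ∀ m, ∃ n : ℕ, (f ^ n) m = 0) (hf : ¬ IsNilpotent f) : tateModule f ≠ ⊥ := by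
  contrapose! hf with htate
  have hdisj : Disjoint (LinearMap.ker f) (⨅ n, LinearMap.range (f ^ n)) := by
    refine Submodule.disjoint_def.2 fun v hv hvD ↦ ?_
    obtain ⟨y, hy, rfl⟩ :=
      exists_mem_tateModule_apply_one_eq (map_iInf_range_pow_eq f).ge hvD hv
    rw [htate, Submodule.mem_bot] at hy
    exact congrFun hy 1
  obtain ⟨n, hn⟩ := exists_inf_le_iInf_of_antitone (LinearMap.ker f) (antitone_range_pow f)
  have hinv : LinearMap.range (f ^ n) ≤ (LinearMap.range (f ^ n)).comap f := by
    rintro _ ⟨m, rfl⟩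
    exact ⟨f m, DFunLike.congr_fun (Commute.pow_self f n).eq m⟩
  have hbot : LinearMap.range (f ^ n) = ⊥ := eq_bot_of_disjoint_ker htors hinv
    (disjoint_iff_inf_le.2 ((le_inf inf_le_left hn).trans hdisj.le_bot))
  exact ⟨n, LinearMap.range_eq_bot.1 hbot⟩

end TateModule

theorem tateModule_ne_zero_of_not_isFiniteLength_general
    {R M : Type*} [CommRing R] [AddCommGroup M] [Module R M] (x : R)
    (htors : ∀ m : M, ∃ n : ℕ, x ^ n • m = 0) (hlen : ¬ IsFiniteLength R M)
    (hfin : IsFiniteLength R (Submodule.torsionBy R M x)) :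
    ∃ y : ℕ → M, (∃ n, 1 ≤ n ∧ y n ≠ 0) ∧
      ∀ n, 1 ≤ n → x ^ n • y n = 0 ∧ x • y (n + 1) = y n := by
  let f : Module.End R M := algebraMap R (Module.End R M) x
  have hpow (n : ℕ) (m : M) : (f ^ n) m = x ^ n • m := by
    rw [← map_pow, Module.algebraMap_end_apply]
  have hnil : ¬ IsNilpotent f := fun h ↦ hlen (isFiniteLength_of_isNilpotent hfin h)
  have : IsArtinian R (LinearMap.ker f) := (isFiniteLength_iff_isNoetherian_isArtinian.1 hfin).2
  obtain ⟨y, hy, hy₀⟩ := Submodule.exists_mem_ne_zero_of_ne_bot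
    (tateModule_ne_bot_of_not_isNilpotent (by simpa only [hpow] using htors) hnil)
  obtain ⟨n, hn⟩ := Function.ne_iff.1 hy₀
  have hn₀ : n ≠ 0 := by
    rintro rfl
    exact hn (tateModule.apply_zero hy)
  exact ⟨y, ⟨n, Nat.one_le_iff_ne_zero.2 hn₀, hn⟩, fun i _ ↦ ⟨hpow i (y i) ▸ (hy i).1, (hy i).2⟩⟩

/-- Let `k` be a field and `M` a module over `k[[u]]` such that every element of `M` is
annihilated by a power of `u`, `M` is not of finite length over `k[[u]]`, and the
`u`-torsion submodule `M[u]` is a finite-dimensional `k`-vector space.  Then the `u`-adic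
Tate module `T_u(M)` is nonzero: there is a sequence `(y_n)_{n ≥ 1}` in `M`, not all zero,
with `u^n • y_n = 0` and `u • y_{n+1} = y_n` for all `n ≥ 1`. -/
theorem tateModule_ne_zero_of_not_isFiniteLength
    {k : Type*} [Field k] (M : Type*) [AddCommGroup M]
    [Module (PowerSeries k) M] [Module k M] [IsScalarTower k (PowerSeries k) M]
    (htors : ∀ m : M, ∃ n : ℕ, (X : PowerSeries k) ^ n • m = 0)
    (hlen : ¬ IsFiniteLength (PowerSeries k) M)
    (hfd : FiniteDimensional k
      ((Submodule.torsionBy (PowerSeries k) M (X : PowerSeries k)).restrictScalars k)) :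
    ∃ y : ℕ → M, (∃ n, 1 ≤ n ∧ y n ≠ 0) ∧
      ∀ n, 1 ≤ n → (X : PowerSeries k) ^ n • y n = 0 ∧ (X : PowerSeries k) • y (n + 1) = y n :=
  tateModule_ne_zero_of_not_isFiniteLength_general X htors hlen
    (isFiniteLength_of_finite_restrictScalars k hfd)
end

section
/- Let M be an 𝔖-module that is derived p-complete and derived u-complete. Assume that the following two k-vector spaces are finite-dimensional over k: (i) {m ∈ M | p • m = 0 and u • m = 0}, and (ii) the quotient {(a, b) ∈ M × M | p • a = u • b} / {(u • m, p • m) | m ∈ M} (these are the cohomology groups in degrees −2 and −1 of the Koszul complex of M with respect to (p, u), i.e., the paper's condition that τ^{<0}(M ⊗^L_𝔖 𝔖/(p,u)) is coherent over k). Then there exists N ∈ ℕ such that every element of M annihilated by some power of p and by some power of u is already annihilated by p^N and by u^N; in symbols, M[p^∞, u^∞] = M[p^N, u^N]. -/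
open PowerSeries

/-- The submodule `{(a, b) ∈ M × M | x • a = y • b}` of cycles in degree `−1` of the Koszul
complex of `M` with respect to `(x, y)`. -/
def koszulCycles (R : Type*) [CommRing R] (x y : R)
    (M : Type*) [AddCommGroup M] [Module R M] : Submodule R (M × M) :=
  LinearMap.ker (x • LinearMap.fst R M M - y • LinearMap.snd R M M)

/-- The map `M → M × M`, `m ↦ (y • m, x • m)`, whose image is the submodule of boundaries
`{(y • m, x • m) | m ∈ M}` inside `koszulCycles R x y M`. -/
def koszulBoundariesMap (R : Type*) [CommRing R] (x y : R)
    (M : Type*) [AddCommGroup M] [Module R M] : M →ₗ[R] M × M :=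
  LinearMap.prod (y • LinearMap.id) (x • LinearMap.id)

/-- The cohomology in degree `−1` of the Koszul complex of `M` with respect to `(x, y)`:
the quotient `{(a, b) ∈ M × M | x • a = y • b} / {(y • m, x • m) | m ∈ M}`. -/
abbrev koszulH1 (R : Type*) [CommRing R] (x y : R)
    (M : Type*) [AddCommGroup M] [Module R M] :=
  koszulCycles R x y M ⧸
    Submodule.comap (koszulCycles R x y M).subtype
      (LinearMap.range (koszulBoundariesMap R x y M))

/-!
Write `f` for multiplication by `x`. A submodule `N` of an `x`-power torsion module `A` is
controlled by the descending sequence of submodules `f ^ n N ∩ ker f` of `A[x]`, much as an ideal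
of `R[X]` is controlled by its ideals of leading coefficients; hence `A` is Artinian as soon as
`A[x]` is. Applied to `x` and then to `y`, this shows that `T = M[x^∞, y^∞]` is Artinian once
`M[x, y]` is. On an Artinian module the images of the powers of `x` stabilise to a submodule on
which `x` is surjective, and a nonzero element of it would start an infinite sequence of successive
divisions by `x`, which derived `x`-completeness forbids. So `x`, and likewise `y`, is nilpotent
on `T`.
-/

open Filter

theorem wellFoundedGT_nat_orderHom {α : Type*} [PartialOrder α] [WellFoundedGT α] :
    WellFoundedGT (ℕ →o α) := by
  rw [wellFoundedGT_iff_monotone_chain_condition]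
  intro f
  -- Past the index `J` where the diagonal `f n n` stabilises, every entry is at most `f J J`, so
  -- only the finitely many rows `n < J` still have to become constant.
  let diagonal : ℕ →o α := ⟨fun n => f n n, fun _ _ h => (f.monotone h _).trans ((f _).monotone h)⟩
  let row (n : ℕ) : ℕ →o α := ⟨fun m => f m n, fun _ _ h => f.monotone h n⟩
  obtain ⟨J, hJ⟩ := WellFoundedGT.monotone_chain_condition diagonal
  have row_const (n : ℕ) : ∀ᶠ B in atTop, ∀ m ≥ B, f B n = f m n := by
    obtain ⟨I, hI⟩ := WellFoundedGT.monotone_chain_condition (row n)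
    filter_upwards [eventually_ge_atTop I] with B hB m hm
    exact (hI B hB).symm.trans (hI m (hB.trans hm))
  obtain ⟨B, hB, hJB⟩ := (((Set.finite_lt_nat J).eventually_all.2
    fun n _ => row_const n).and (eventually_ge_atTop J)).exists
  refine ⟨B, fun m hm => le_antisymm (f.monotone hm) fun n => ?_⟩
  obtain hn | hn := lt_or_ge n J
  · exact (hB n hn m hm).ge
  · calc f m n ≤ f (max m n) (max m n) :=
          (f.monotone (le_max_left m n) n).trans ((f _).monotone (le_max_right m n))
      _ = f J J := (hJ _ (hn.trans (le_max_right m n))).symm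
      _ ≤ f B n := (f.monotone hJB J).trans ((f B).monotone hn)

section Torsion

variable {R A : Type*} [CommRing R] [AddCommGroup A] [Module R A] (x : R)

/-- The descending sequence `n ↦ x ^ n N ∩ A[x]` of submodules of `A[x]`, encoded as a monotone
map to the order dual. It is the analogue for `N` of the leading coefficient ideals of an ideal of
polynomials. -/
def torsionTrace (N : Submodule R A) : ℕ →o (Submodule R (Submodule.torsionBy R A x))ᵒᵈ where
  toFun n := OrderDual.toDual
    ((N.map (LinearMap.lsmul R A (x ^ n))).submoduleOf (Submodule.torsionBy R A x))
  monotone' m n hmn := by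
    obtain ⟨c, rfl⟩ := Nat.exists_eq_add_of_le hmn
    rintro _ ⟨a, ha, hax⟩
    refine ⟨x ^ c • a, N.smul_mem _ ha, hax ▸ ?_⟩
    simp only [LinearMap.lsmul_apply, pow_add, mul_smul]

theorem antitone_torsionTrace : Antitone (torsionTrace (A := A) x) :=
  fun _ _ h _ => Submodule.comap_mono (Submodule.map_mono h)

variable {x}

theorem le_of_torsionTrace_le (hx : ∀ a : A, ∃ n : ℕ, x ^ n • a = 0) {N N' : Submodule R A}
    (hN : N ≤ N') (h : torsionTrace x N ≤ torsionTrace x N') : N' ≤ N := by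
  have mem_of_pow_smul_eq_zero (n : ℕ) : ∀ a ∈ N', x ^ n • a = 0 → a ∈ N := by
    induction n with
    | zero => simp +contextual
    | succ n ih =>
      intro a ha hxa
      rw [pow_succ', mul_smul] at hxa
      obtain ⟨b, hb, hba⟩ : ∃ b ∈ N, x ^ n • b = x ^ n • a :=
        @h n ⟨x ^ n • a, hxa⟩ ⟨a, ha, rfl⟩
      have hab : a - b ∈ N := ih _ (N'.sub_mem ha (hN hb)) (by rw [smul_sub, hba, sub_self])
      exact (N.sub_mem_iff_left hb).1 hab
  intro a ha
  obtain ⟨n, hn⟩ := hx a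
  exact mem_of_pow_smul_eq_zero n a ha hn

theorem isArtinian_of_isArtinian_torsionBy (hx : ∀ a : A, ∃ n : ℕ, x ^ n • a = 0)
    [IsArtinian R (Submodule.torsionBy R A x)] : IsArtinian R A := by
  have : WellFoundedGT (ℕ →o (Submodule R (Submodule.torsionBy R A x))ᵒᵈ) :=
    wellFoundedGT_nat_orderHom
  have strictAnti : StrictAnti (torsionTrace (A := A) x) := fun _ _ h =>
    (antitone_torsionTrace x h.le).lt_of_not_ge fun h' =>
      h.not_ge (le_of_torsionTrace_le hx h.le h')
  exact strictAnti.wellFoundedLT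

theorem mem_torsion'_powers {a : A} :
    a ∈ Submodule.torsion' R A (Submonoid.powers x) ↔ ∃ n : ℕ, x ^ n • a = 0 := by
  simp [Submodule.mem_torsion'_iff, Subtype.exists, Submonoid.mem_powers_iff, Submonoid.smul_def]

theorem isArtinian_of_isArtinian_inf_torsionBy {T : Submodule R A}
    (hT : T ≤ Submodule.torsion' R A (Submonoid.powers x))
    [IsArtinian R ↥(T ⊓ Submodule.torsionBy R A x)] : IsArtinian R T := by
  let ι : Submodule.torsionBy R T x →ₗ[R] ↥(T ⊓ Submodule.torsionBy R A x) :=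
    (T.subtype ∘ₗ Submodule.subtype _).codRestrict _ fun t =>
      ⟨t.1.2, congrArg Subtype.val t.2⟩
  have ι_injective : Function.Injective ι := (LinearMap.injective_codRestrict_iff ..).2
    (T.subtype_injective.comp (Submodule.subtype_injective _))
  have : IsArtinian R (Submodule.torsionBy R T x) := isArtinian_of_injective ι ι_injective
  refine isArtinian_of_isArtinian_torsionBy (x := x) fun t => ?_
  obtain ⟨n, hn⟩ := mem_torsion'_powers.1 (hT t.2)
  exact ⟨n, Subtype.ext hn⟩

theorem isArtinian_torsion'_powers_inf (x y : R)
    [IsArtinian R ↥(Submodule.torsionBy R A x ⊓ Submodule.torsionBy R A y)] :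
    IsArtinian R ↥(Submodule.torsion' R A (Submonoid.powers x) ⊓
      Submodule.torsion' R A (Submonoid.powers y)) := by
  set T := Submodule.torsion' R A (Submonoid.powers x) ⊓
    Submodule.torsion' R A (Submonoid.powers y)
  have : IsArtinian R ↥(T ⊓ Submodule.torsionBy R A x ⊓ Submodule.torsionBy R A y) :=
    isArtinian_of_le (inf_le_inf_right _ inf_le_right)
  have : IsArtinian R ↥(T ⊓ Submodule.torsionBy R A x) :=
    isArtinian_of_isArtinian_inf_torsionBy (inf_le_left.trans inf_le_right)
  exact isArtinian_of_isArtinian_inf_torsionBy inf_le_left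

end Torsion

section ResidueRing

theorem isArtinian_of_isTorsionBySet {R A : Type*} [CommRing R] [AddCommGroup A] [Module R A]
    [Module.Finite R A] {I : Ideal R} [IsArtinianRing (R ⧸ I)] (hI : Module.IsTorsionBySet R A I) :
    IsArtinian R A := by
  let : Module (R ⧸ I) A := hI.module
  have : IsScalarTower R (R ⧸ I) A := hI.isScalarTower
  have : Module.Finite (R ⧸ I) A := Module.Finite.of_restrictScalars_finite R _ A
  exact isArtinian_of_surjective_algebraMap (R := R ⧸ I) Ideal.Quotient.mk_surjective

theorem isArtinian_torsionBy_inf_torsionBy {R M : Type*} [CommRing R] [AddCommGroup M] [Module R M]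
    (x y : R) [IsArtinianRing (R ⧸ Ideal.span {x, y})]
    [Module.Finite R ↥(Submodule.torsionBy R M x ⊓ Submodule.torsionBy R M y)] :
    IsArtinian R ↥(Submodule.torsionBy R M x ⊓ Submodule.torsionBy R M y) := by
  refine isArtinian_of_isTorsionBySet (I := Ideal.span {x, y}) ?_
  refine (Module.isTorsionBySet_iff_is_torsion_by_span _).1 ?_
  rintro ⟨m, hx, hy⟩ ⟨r, rfl | rfl⟩
  · exact Subtype.ext hx
  · exact Subtype.ext hy

theorem comap_constantCoeff_span {A : Type*} [CommRing A] (S : Set A) :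
    (Ideal.span S).comap (constantCoeff (R := A)) = Ideal.span (insert X (C '' S)) :=
  eq_span_insert_X_of_X_mem_of_span_eq (by simp [Ideal.mem_comap])
    (Ideal.map_comap_of_surjective _ constantCoeff_surj _).symm

variable (p : ℕ) [Fact p.Prime] (k : Type*) [Field k] [CharP k p] [PerfectRing k p]

theorem isMaximal_span_p : (Ideal.span {(p : WittVector p k)}).IsMaximal := by
  rw [← WittVector.ker_constantCoeff]
  exact RingHom.ker_isMaximal_of_surjective _ (WittVector.constantCoeff_surjective p)

theorem isMaximal_span_p_X : (Ideal.span {(p : PowerSeries (WittVector p k)), X}).IsMaximal := by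
  have := isMaximal_span_p p k
  have comap_eq := comap_constantCoeff_span {(p : WittVector p k)}
  rw [Set.image_singleton, map_natCast, Set.pair_comm] at comap_eq
  exact comap_eq ▸ Ideal.comap_isMaximal_of_surjective _ constantCoeff_surj

instance isArtinianRing_quotient_span_p_X :
    IsArtinianRing (PowerSeries (WittVector p k) ⧸
      Ideal.span {(p : PowerSeries (WittVector p k)), X}) := by
  have := isMaximal_span_p_X p k
  let := Ideal.Quotient.field (Ideal.span {(p : PowerSeries (WittVector p k)), X})
  infer_instance

end ResidueRing

section DerivedSeparated

theorem isNilpotent_of_forall_divisible_seq_eq_zero {R A : Type*} [Ring R] [AddCommGroup A]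
    [Module R A] [IsArtinian R A] {f : Module.End R A}
    (hf : ∀ a : ℕ → A, (∀ n, a n = f (a (n + 1))) → a = 0) : IsNilpotent f := by
  obtain ⟨N, hN⟩ := eventually_atTop.1 f.eventually_iInf_range_pow_eq
  have range_eq : LinearMap.range (f ^ N) = LinearMap.range (f ^ (N + 1)) :=
    (hN N le_rfl).symm.trans (hN (N + 1) N.le_succ)
  have exists_preimage (a : A) : ∃ b, (f ^ N) a = f ((f ^ N) b) := by
    obtain ⟨b, hb⟩ := range_eq.le ⟨a, rfl⟩
    exact ⟨b, by rw [← hb, pow_succ', Module.End.mul_apply]⟩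
  choose g hg using exists_preimage
  refine ⟨N, LinearMap.ext fun a => ?_⟩
  have divisible (n : ℕ) : (f ^ N) (g^[n] a) = f ((f ^ N) (g^[n + 1] a)) := by
    rw [Function.iterate_succ_apply', ← hg]
  exact congrFun (hf (fun n => (f ^ N) (g^[n] a)) divisible) 0

/-- An `R`-module `M` is *derived `x`-separated* if the limit of `⋯ →ˣ M →ˣ M` vanishes, i.e. no
nonzero sequence consists of successive divisions by `x`. This is the injectivity of `Φ_x`, one
half of derived `x`-completeness. -/
def IsDerivedSeparated (R : Type*) [CommRing R] (x : R)
    (M : Type*) [AddCommGroup M] [Module R M] : Prop :=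
  ∀ a : ℕ → M, (∀ n, a n = x • a (n + 1)) → a = 0

variable {R M : Type*} [CommRing R] [AddCommGroup M] [Module R M] {x y : R}

theorem IsDerivedComplete.isDerivedSeparated (h : IsDerivedComplete R x M) :
    IsDerivedSeparated R x M :=
  fun a ha => h.1 (funext fun n => by simpa [sub_eq_zero] using ha n)

theorem IsDerivedSeparated.submodule (h : IsDerivedSeparated R x M) (T : Submodule R M) :
    IsDerivedSeparated R x T := fun a ha =>
  funext fun n => Subtype.ext (congrFun (h (fun n => a n) fun n => congrArg Subtype.val (ha n)) n)

theorem IsDerivedSeparated.eventually_pow_smul_eq_zero (h : IsDerivedSeparated R x M)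
    (T : Submodule R M) [IsArtinian R T] : ∀ᶠ N in atTop, ∀ m ∈ T, x ^ N • m = 0 := by
  obtain ⟨N, hN⟩ : IsNilpotent (algebraMap R (Module.End R T) x) :=
    isNilpotent_of_forall_divisible_seq_eq_zero (h.submodule T)
  filter_upwards [eventually_ge_atTop N] with n hn m hm
  have pow_eq_zero : algebraMap R (Module.End R T) (x ^ n) = 0 := by
    rw [map_pow, pow_eq_zero_of_le hn hN]
  exact congrArg Subtype.val (LinearMap.congr_fun pow_eq_zero ⟨m, hm⟩)

theorem torsion_bounded_of_koszul_coherent_general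
    [IsArtinian R ↥(Submodule.torsionBy R M x ⊓ Submodule.torsionBy R M y)]
    (hx : IsDerivedSeparated R x M) (hy : IsDerivedSeparated R y M) :
    ∃ N : ℕ, ∀ m : M, (∃ a b : ℕ, x ^ a • m = 0 ∧ y ^ b • m = 0) →
      x ^ N • m = 0 ∧ y ^ N • m = 0 := by
  let T := Submodule.torsion' R M (Submonoid.powers x) ⊓
    Submodule.torsion' R M (Submonoid.powers y)
  have : IsArtinian R T := isArtinian_torsion'_powers_inf x y
  obtain ⟨N, hNx, hNy⟩ :=
    ((hx.eventually_pow_smul_eq_zero T).and (hy.eventually_pow_smul_eq_zero T)).exists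
  refine ⟨N, fun m ⟨a, b, ha, hb⟩ => ?_⟩
  have hm : m ∈ T := ⟨mem_torsion'_powers.2 ⟨a, ha⟩, mem_torsion'_powers.2 ⟨b, hb⟩⟩
  exact ⟨hNx m hm, hNy m hm⟩

end DerivedSeparated

/-- Let `p` be a prime, `k` a perfect field of characteristic `p`, and
`𝔖 = W(k)[[u]]`.  Let `M` be an `𝔖`-module which is derived `p`-complete and derived
`u`-complete, and assume that the degree `−2` and degree `−1` cohomology groups of the
Koszul complex of `M` with respect to `(p, u)`, namely
`{m ∈ M | p • m = 0 ∧ u • m = 0}` and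
`{(a, b) ∈ M × M | p • a = u • b} / {(u • m, p • m) | m ∈ M}`,
are finite-dimensional over `k` (they are `𝔖`-modules annihilated by `p` and `u`, hence
`k`-vector spaces, and finite dimensionality over `k` is expressed here as finite
generation over `𝔖`).  Then there is an `N ∈ ℕ` such that every element of `M`
annihilated by a power of `p` and a power of `u` is annihilated by `p^N` and by `u^N`,
i.e. `M[p^∞, u^∞] = M[p^N, u^N]`. -/
theorem torsion_bounded_of_koszul_coherent
    (p : ℕ) [Fact p.Prime] (k : Type*) [Field k] [CharP k p] [PerfectRing k p]
    (M : Type*) [AddCommGroup M] [Module (PowerSeries (WittVector p k)) M]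
    (hp : IsDerivedComplete (PowerSeries (WittVector p k))
      (p : PowerSeries (WittVector p k)) M)
    (hu : IsDerivedComplete (PowerSeries (WittVector p k))
      (X : PowerSeries (WittVector p k)) M)
    (hH2 : Module.Finite (PowerSeries (WittVector p k))
      ↥((Submodule.torsionBy (PowerSeries (WittVector p k)) M
          (p : PowerSeries (WittVector p k))) ⊓
        (Submodule.torsionBy (PowerSeries (WittVector p k)) M
          (X : PowerSeries (WittVector p k)))))
    (hH1 : Module.Finite (PowerSeries (WittVector p k))
      (koszulH1 (PowerSeries (WittVector p k)) (p : PowerSeries (WittVector p k))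
        (X : PowerSeries (WittVector p k)) M)) :
    ∃ N : ℕ, ∀ m : M,
      (∃ a b : ℕ, (p : PowerSeries (WittVector p k)) ^ a • m = 0 ∧
        (X : PowerSeries (WittVector p k)) ^ b • m = 0) →
      (p : PowerSeries (WittVector p k)) ^ N • m = 0 ∧
        (X : PowerSeries (WittVector p k)) ^ N • m = 0 := by
  have := isArtinian_torsionBy_inf_torsionBy (M := M) (p : PowerSeries (WittVector p k)) X
  exact torsion_bounded_of_koszul_coherent_general hp.isDerivedSeparated hu.isDerivedSeparated
end

section
/- Let R be a commutative ring, x ∈ R, and let (M_α)_{α ∈ A} be a family of R-modules, each of which is derived x-complete. Then the x-adic Tate module of the direct sum vanishes: every sequence (y_n)_{n ≥ 1} of elements of ⊕_{α ∈ A} M_α with x^n • y_n = 0 and x • y_{n+1} = y_n for all n ≥ 1 is identically zero, i.e., T_x(⊕_{α ∈ A} M_α) = 0. -/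
open DirectSum

theorem eq_zero_of_smul_succ_eq_of_injective {R M : Type*} [AddGroup M] [SMulZeroClass R M] {x : R}
    (hinj : Function.Injective fun (f : ℕ → M) n => f n - x • f (n + 1))
    {z : ℕ → M} (hz : ∀ n, x • z (n + 1) = z n) : z = 0 := by
  apply hinj
  funext n
  simp [hz]

-- `hM` says that the limit of `⋯ → M α → M α` along multiplication by `x` vanishes.
theorem tateModule_directSum_eq_zero_general
    {R : Type*} [Semiring R] (x : R) {A : Type*}
    (M : A → Type*) [∀ α, AddCommMonoid (M α)] [∀ α, Module R (M α)]
    (hM : ∀ α (z : ℕ → M α), (∀ n, x • z (n + 1) = z n) → z = 0)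
    (y : ℕ → ⨁ α, M α) (hy : ∀ n, 1 ≤ n → x • y (n + 1) = y n) :
    ∀ n, 1 ≤ n → y n = 0 := by
  intro n hn
  ext α
  have compatible (k : ℕ) : x • y (n + (k + 1)) α = y (n + k) α := by
    rw [← DirectSum.smul_apply, ← add_assoc, hy (n + k) (by lia)]
  exact congrFun (hM α (fun k => y (n + k) α) compatible) 0

/-- If `(M_α)_{α ∈ A}` is a family of derived `x`-complete `R`-modules, then the `x`-adic
Tate module of `⊕_α M_α` vanishes: every sequence `(y_n)_{n ≥ 1}` in the direct sum with
`x^n • y_n = 0` and `x • y_{n+1} = y_n` for all `n ≥ 1` is identically zero. -/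
theorem tateModule_directSum_eq_zero
    {R : Type*} [CommRing R] (x : R) {A : Type*}
    (M : A → Type*) [∀ α, AddCommGroup (M α)] [∀ α, Module R (M α)]
    (hM : ∀ α, IsDerivedComplete R x (M α))
    (y : ℕ → ⨁ α, M α)
    (hy : ∀ n, 1 ≤ n → x ^ n • y n = 0 ∧ x • y (n + 1) = y n) :
    ∀ n, 1 ≤ n → y n = 0 :=
  tateModule_directSum_eq_zero_general x M
    (fun α _ => eq_zero_of_smul_succ_eq_of_injective (hM α).injective) y fun n hn => (hy n hn).2
end

section
/- Let A be a discrete condensed abelian group and let q : A ⟶ Q be an epimorphism in the category of condensed abelian groups. Then Q is discrete. -/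
open CategoryTheory

universe u

/-!
For a condensed module `Q`, let `M` be its module of points. The counit from the
discrete condensed module on `M` to `Q` is bijective on points. A locally constant function is
determined by its values at points, so this counit is a monomorphism. If `Q` is a quotient of a
discrete module, then naturality makes the counit an epimorphism as well, and the category of
condensed modules is balanced.
-/

universe w

namespace CondensedAb

open Opposite

theorem mem_essImage_of_epi_of_mono_counit {C D : Type*} [Category* C] [Category* D] [Balanced D]
    {L : C ⥤ D} {G : D ⥤ C} [L.Full] [L.Faithful] (adj : L ⊣ G) {X Y : D}
    (hX : L.essImage X) (q : X ⟶ Y) [Epi q] [Mono (adj.counit.app Y)] : L.essImage Y := by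
  have : IsIso (adj.counit.app X) := adj.isIso_counit_app_iff_mem_essImage.2 hX
  have : Epi (adj.counit.app Y) := epi_of_epi_fac (adj.counit_naturality q)
  exact adj.isIso_counit_app_iff_mem_essImage.1 (isIso_of_mono_of_epi _)

open CompHausLike CompHausLike.LocallyConstantModule in
theorem injective_app_of_injective_app_punit {P : TopCat.{u} → Prop} [HasProp P PUnit.{u + 1}]
    {R : Type (max u w)} [Ring R] {M : ModuleCat.{max u w} R}
    {F : (CompHausLike.{u} P)ᵒᵖ ⥤ ModuleCat.{max u w} R}
    (φ : (functorToPresheaves.{w} R).obj M ⟶ F)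
    (hφ : Function.Injective (φ.app (op (CompHausLike.of P PUnit.{u + 1}))))
    (S : (CompHausLike.{u} P)ᵒᵖ) : Function.Injective (φ.app S) := by
  intro x y hxy
  refine LocallyConstant.ext fun s ↦ ?_
  let ι : CompHausLike.of P PUnit.{u + 1} ⟶ S.unop := ofHom P (ContinuousMap.const PUnit s)
  have restrict_eq : ((functorToPresheaves.{w} R).obj M).map ι.op x =
      ((functorToPresheaves.{w} R).obj M).map ι.op y :=
    hφ <| by rw [NatTrans.naturality_apply, NatTrans.naturality_apply, hxy]
  exact LocallyConstant.congr_fun restrict_eq PUnit.unit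

instance mono_locallyConstant_counit_app {R : Type (u + 1)} [Ring R] (Q : CondensedMod.{u} R) :
    Mono ((CondensedMod.LocallyConstant.adjunction R).counit.app Q) := by
  let ε := (CondensedMod.LocallyConstant.adjunction R).counit.app Q
  have : IsIso ((Condensed.underlying (ModuleCat R)).map ε) := inferInstance
  have injective_on_point : Function.Injective ((Condensed.underlying (ModuleCat R)).map ε) :=
    ((ConcreteCategory.isIso_iff_bijective _).1 this).1
  exact Sheaf.mono_of_injective _ fun S ↦
    injective_app_of_injective_app_punit.{u, u + 1} ε.hom injective_on_point S

theorem isDiscrete_of_epi_general {R : Type (u + 1)} [Ring R] (A Q : CondensedMod.{u} R)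
    (hA : A.IsDiscrete) (q : A ⟶ Q) [Epi q] : Q.IsDiscrete :=
  ((CondensedMod.isDiscrete_tfae R Q).out 0 3).2 <|
    mem_essImage_of_epi_of_mono_counit (CondensedMod.LocallyConstant.adjunction R)
      (((CondensedMod.isDiscrete_tfae R A).out 0 3).1 hA) q

end CondensedAb

/-- Let `A` be a discrete condensed abelian group (i.e. `A` is in the essential image of
the discrete/constant-sheaf functor) and let `q : A ⟶ Q` be an epimorphism of condensed
abelian groups.  Then `Q` is discrete. -/
theorem CondensedAb.isDiscrete_of_epi (A Q : CondensedAb.{u}) (hA : A.IsDiscrete)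
    (q : A ⟶ Q) [Epi q] : Q.IsDiscrete :=
  CondensedAb.isDiscrete_of_epi_general A Q hA q
end

section
/- Let A be a discrete condensed abelian group and let ι : N ⟶ A be a monomorphism in the category of condensed abelian groups. Then N is discrete. -/
open CategoryTheory

universe u

/-!
A condensed set `X` is discrete if and only if `X(S) = colim X(Sⱼ)` for every profinite set `S`,
where `Sⱼ` runs over the finite quotients of `S`. Each projection `S ⟶ Sⱼ` has a section, so every
map `X(Sⱼ) ⟶ X(S)` has a retraction; in particular it is injective, and the colimit condition only
says that each `x ∈ X(S)` comes from some `X(Sⱼ)`. If `X` embeds in `Y` and the image of `x` in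
`Y(S)` comes from `Y(Sⱼ)`, then restricting `x` along the section and pulling back to `S` recovers
`x`. For condensed modules, the forgetful functor to condensed sets preserves monomorphisms, being
a right adjoint, and detects discreteness.
-/

open Limits

universe w

theorem mem_range_map_of_app_mem_range_map {C : Type*} [Category* C] {F G : C ⥤ Type w}
    (i : F ⟶ G) {X Y : C} (p : X ⟶ Y) [IsSplitMono p] (hi : Function.Injective (i.app Y))
    {x : F.obj Y} (hx : i.app Y x ∈ Set.range (G.map p)) :
    x ∈ Set.range (F.map p) := by
  obtain ⟨a, ha⟩ := hx
  have app_retraction : i.app X (F.map (retraction p) x) = a := by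
    rw [NatTrans.naturality_apply, ← ha, ← Functor.map_comp_apply, IsSplitMono.id,
      Functor.map_id_apply]
  refine ⟨F.map (retraction p) x, hi ?_⟩
  rw [NatTrans.naturality_apply, app_retraction, ha]

theorem nonempty_isColimit_iff_of_injective {J : Type*} [Category* J] [IsFilteredOrEmpty J]
    {F : J ⥤ Type w} (c : Cocone F) (hc : ∀ j, Function.Injective (c.ι.app j)) :
    Nonempty (IsColimit c) ↔ ∀ x : c.pt, ∃ j, x ∈ Set.range (c.ι.app j) := by
  constructor
  · rintro ⟨h⟩ x
    exact Types.jointly_surjective_of_isColimit h x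
  · intro h
    refine ⟨Types.FilteredColimit.isColimitOf' _ _ (fun x ↦ ?_)
      fun j _ _ hxy ↦ ⟨j, 𝟙 j, congrArg _ (hc j hxy)⟩⟩
    obtain ⟨j, y, hy⟩ := h x
    exact ⟨j, y, hy.symm⟩

theorem injective_map_of_isSplitMono {C : Type*} [Category* C] (F : C ⥤ Type w) {X Y : C}
    (p : X ⟶ Y) [IsSplitMono p] : Function.Injective (F.map p) :=
  (mono_iff_injective _).mp inferInstance

theorem nonempty_isColimit_mapCocone_of_injective {C J : Type*} [Category* C] [Category* J]
    [IsFilteredOrEmpty J] {F G : C ⥤ Type w} (i : F ⟶ G) {D : J ⥤ C} (c : Cocone D)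
    [∀ j, IsSplitMono (c.ι.app j)] (hi : Function.Injective (i.app c.pt))
    (hG : Nonempty (IsColimit (G.mapCocone c))) : Nonempty (IsColimit (F.mapCocone c)) := by
  rw [nonempty_isColimit_iff_of_injective _ fun j ↦ injective_map_of_isSplitMono _ (c.ι.app j)]
    at hG ⊢
  intro x
  obtain ⟨j, hj⟩ := hG (i.app c.pt x)
  exact ⟨j, mem_range_map_of_app_mem_range_map i (c.ι.app j) hi hj⟩

theorem isSplitEpi_of_surjective_of_discreteTopology {P : TopCat.{u} → Prop}
    {X Y : CompHausLike.{u} P} [DiscreteTopology Y] (f : X ⟶ Y) (hf : Function.Surjective f) :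
    IsSplitEpi f := by
  obtain ⟨s, hs⟩ := hf.hasRightInverse
  refine ⟨⟨CompHausLike.ofHom P ⟨s, continuous_of_discreteTopology⟩, ?_⟩⟩
  ext y
  exact hs y

theorem isSplitEpi_asLimitCone_π_app (S : Profinite.{u}) (j : DiscreteQuotient S) :
    IsSplitEpi (S.asLimitCone.π.app j) :=
  have : DiscreteTopology (S.diagram.obj j) := ⟨rfl⟩
  isSplitEpi_of_surjective_of_discreteTopology _ j.proj_surjective

theorem isDiscrete_condensedSet_of_mono {X Y : CondensedSet.{u}} (hY : Y.IsDiscrete)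
    (i : X ⟶ Y) [Mono i] : X.IsDiscrete := by
  rw [((CondensedSet.isDiscrete_tfae _).out 0 6 :)] at hY ⊢
  intro S
  have (j : (DiscreteQuotient S)ᵒᵖ) : IsSplitMono (S.asLimitCone.op.ι.app j) :=
    have := isSplitEpi_asLimitCone_π_app S j.unop
    inferInstanceAs (IsSplitMono (S.asLimitCone.π.app j.unop).op)
  exact nonempty_isColimit_mapCocone_of_injective
    (Functor.whiskerLeft profiniteToCompHaus.op i.hom) S.asLimitCone.op
    ((mono_iff_injective (i.hom.app _)).mp inferInstance) (hY S)

theorem CondensedAb.isDiscrete_of_mono_general (R : Type (u + 1)) [Ring R]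
    (M N : CondensedMod.{u} R) (hM : M.IsDiscrete) (ι : N ⟶ M) [Mono ι] : N.IsDiscrete := by
  rw [CondensedMod.isDiscrete_iff_isDiscrete_forget] at hM ⊢
  have := (Condensed.freeForgetAdjunction R).isRightAdjoint
  exact isDiscrete_condensedSet_of_mono hM ((Condensed.forget R).map ι)

/-- Let `A` be a discrete condensed abelian group (i.e. `A` is in the essential image of
the discrete/constant-sheaf functor) and let `ι : N ⟶ A` be a monomorphism of condensed
abelian groups.  Then `N` is discrete. -/
theorem CondensedAb.isDiscrete_of_mono (A N : CondensedAb.{u}) (hA : A.IsDiscrete)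
    (ι : N ⟶ A) [Mono ι] : N.IsDiscrete :=
  CondensedAb.isDiscrete_of_mono_general _ A N hA ι
end

section
/- For every condensed set X, the counit morphism ε_X : disc(X(*)) ⟶ X is a monomorphism of condensed sets, where disc : Set → CondensedSet denotes the discrete (constant sheaf) functor, left adjoint to the underlying-set functor X ↦ X(*) given by evaluation at the one-point compact Hausdorff space, and ε is the counit of this adjunction. -/
open CategoryTheory

universe u

/-!
By uniqueness of left adjoints, `disc(A)` may be replaced by the sheaf `S ↦ LocallyConstant S A`.
A locally constant map is determined by its values, that is, by its restrictions along the points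
`* ⟶ S`. By naturality, injectivity of the counit on `S` therefore reduces to injectivity on the
point, where the counit is even bijective because the constant sheaf functor is fully faithful.
-/

open Opposite

universe w

section Sites

variable {C : Type*} [Category* C]

/-- A presheaf of sets `F` is separated by `T`-points if every section of `F`, over any object `S`,
is determined by its restrictions along the morphisms `T ⟶ S`. The object `T` is arbitrary; it is
the one-point space in the application to condensed sets. -/
def IsSeparatedByPoints (T : C) (F : Cᵒᵖ ⥤ Type w) : Prop :=
  ∀ ⦃S : C⦄ ⦃x y : F.obj (op S)⦄, (∀ t : T ⟶ S, F.map t.op x = F.map t.op y) → x = y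

theorem IsSeparatedByPoints.injective_app {T : C} {F G : Cᵒᵖ ⥤ Type w}
    (hF : IsSeparatedByPoints T F) (α : F ⟶ G) (hα : Function.Injective (α.app (op T)))
    (S : Cᵒᵖ) : Function.Injective (α.app S) := by
  intro x y hxy
  refine hF fun t ↦ hα ?_
  calc α.app (op T) (F.map t.op x)
    _ = G.map t.op (α.app S x) := NatTrans.naturality_apply α t.op x
    _ = G.map t.op (α.app S y) := congrArg (G.map t.op) hxy
    _ = α.app (op T) (F.map t.op y) := (NatTrans.naturality_apply α t.op y).symm

theorem mono_counit_app_of_isSeparatedByPoints {J : GrothendieckTopology C} {T : C}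
    {L : Type w ⥤ Sheaf J (Type w)} [L.Full] [L.Faithful]
    (adj : L ⊣ (sheafSections J (Type w)).obj (op T)) (X : Sheaf J (Type w))
    (hX : IsSeparatedByPoints T (L.obj (X.obj.obj (op T))).obj) :
    Mono (adj.counit.app X) := by
  have counit_bijective : Function.Bijective ((adj.counit.app X).hom.app (op T)) :=
    (isIso_iff_bijective (((sheafSections J (Type w)).obj (op T)).map (adj.counit.app X))).mp
      inferInstance
  exact Sheaf.mono_of_injective _ (hX.injective_app _ counit_bijective.injective)

end Sites

theorem mono_counit_app_iff_of_leftAdjoints {C D : Type*} [Category* C] [Category* D]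
    {L L' : C ⥤ D} {R : D ⥤ C} (adj : L ⊣ R) (adj' : L' ⊣ R) (X : D) :
    Mono (adj.counit.app X) ↔ Mono (adj'.counit.app X) := by
  rw [← adj.leftAdjointUniq_hom_app_counit adj' X]
  exact mono_comp_iff_of_isIso _ _

section CompHausLike

open CompHausLike

variable {P : TopCat.{u} → Prop} [HasProp P PUnit.{u + 1}]

theorem isSeparatedByPoints_functorToPresheaves (A : Type (max u w)) :
    IsSeparatedByPoints (CompHausLike.of P PUnit.{u + 1})
      (LocallyConstant.functorToPresheaves.{u, w}.obj A) := by
  intro S f g h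
  refine LocallyConstant.ext fun s ↦ ?_
  exact LocallyConstant.congr_fun (h (CompHausLike.const _ s)) PUnit.unit

theorem CondensedSet.mono_discreteUnderlyingAdj_counit_app_general
    [∀ (S : CompHausLike.{u} P) (p : S → Prop), HasProp P (Subtype p)]
    [HasExplicitFiniteCoproducts.{u} P] [HasExplicitFiniteCoproducts.{0} P]
    [HasExplicitPullbacks P] [Preregular (CompHausLike P)]
    (hs : ∀ ⦃S T : CompHausLike P⦄ (f : S ⟶ T), EffectiveEpi f → Function.Surjective f)
    {L : Type (max u w) ⥤ Sheaf (coherentTopology (CompHausLike.{u} P)) (Type (max u w))}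
    (adj : L ⊣ (sheafSections _ _).obj (op (CompHausLike.of P PUnit.{u + 1})))
    (X : Sheaf (coherentTopology (CompHausLike.{u} P)) (Type (max u w))) :
    Mono (adj.counit.app X) := by
  let adj' := CompHausLike.LocallyConstant.adjunction.{u, w} P hs
  have := adj'.fullyFaithfulLOfIsIsoUnit.full
  have := adj'.fullyFaithfulLOfIsIsoUnit.faithful
  rw [mono_counit_app_iff_of_leftAdjoints adj adj' X]
  exact mono_counit_app_of_isSeparatedByPoints adj' X (isSeparatedByPoints_functorToPresheaves _)

end CompHausLike

/-- For every condensed set `X`, the counit `disc(X(*)) ⟶ X` of the adjunction between the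
discrete (constant sheaf) functor `Set → CondensedSet` and the underlying-set functor
(evaluation at the one-point compact Hausdorff space) is a monomorphism of condensed
sets. -/
theorem CondensedSet.mono_discreteUnderlyingAdj_counit_app (X : CondensedSet.{u}) :
    Mono ((Condensed.discreteUnderlyingAdj (Type (u + 1))).counit.app X) :=
  mono_discreteUnderlyingAdj_counit_app_general.{u, u + 1}
    (fun _ _ f ↦ ((CompHaus.effectiveEpi_tfae f).out 0 2).mp)
    (Condensed.discreteUnderlyingAdj (Type (u + 1))) X
end
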